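/- arXiv:1808.02759 — 10 statements merged into one kernel-verified Lean document; each statement's English description precedes it below -/
import Mathlib

section
/- Let λ^f, λ^s ∈ ℂ, H > 0, Δc ∈ ℝ, w, Y_1, …, Y_p ∈ ℂ, and real coefficients γ^k_j for 1 ≤ j ≤ p and 0 ≤ k ≤ K. If v : ℝ → ℂ satisfies v(0) = w and v'(θ) = Δc·λ^f·v(θ) + λ^s·Σ_{j=1}^{p} Σ_{k=0}^{K} γ^k_j (θ/H)^k Y_j for every θ ∈ [0,H], then v(H) = φ_0(Δc·Hλ^f)·w + Hλ^s·Σ_{j=1}^{p} ( Σ_{k=0}^{K} γ^k_j φ_{k+1}(Δc·Hλ^f) )·Y_j. (This is the exact solution of one MRI-GARK stage applied to the scalar test problem y' = λ^f y + λ^s y.) -/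
/-- The `φ` functions: `φ_0(z) = e^z` and, for `k ≥ 1`,
`φ_k(z) = ∫_0^1 e^{z(1−t)} t^{k−1} dt`. -/
noncomputable def phi : ℕ → ℂ → ℂ
  | 0, z => Complex.exp z
  | (k + 1), z => ∫ t in (0:ℝ)..1, Complex.exp (z * (1 - (t : ℂ))) * (t : ℂ) ^ k

/-- Exact solution of one MRI-GARK stage applied to the scalar test problem
`y' = λᶠ y + λˢ y`: if `v(0) = w` and
`v'(θ) = Δc·λᶠ·v(θ) + λˢ·Σ_j Σ_k γᵏ_j (θ/H)^k Y_j` on `[0,H]`, then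
`v(H) = φ_0(Δc·Hλᶠ)·w + Hλˢ·Σ_j (Σ_k γᵏ_j φ_{k+1}(Δc·Hλᶠ))·Y_j`. -/
theorem stmt3 {p K : ℕ} (lamf lams : ℂ) (H : ℝ) (hH : 0 < H) (Δc : ℝ)
    (w : ℂ) (Y : Fin p → ℂ) (γ : Fin (K + 1) → Fin p → ℝ) (v : ℝ → ℂ)
    (hv0 : v 0 = w)
    (hv : ∀ θ ∈ Set.Icc (0:ℝ) H,
      HasDerivAt v ((Δc : ℂ) * lamf * v θ
        + lams * ∑ j : Fin p, ∑ k : Fin (K + 1),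
            (γ k j : ℂ) * ((θ / H : ℝ) : ℂ) ^ (k : ℕ) * Y j) θ) :
    v H = phi 0 ((Δc : ℂ) * (H : ℂ) * lamf) * w
      + (H : ℂ) * lams * ∑ j : Fin p,
          (∑ k : Fin (K + 1), (γ k j : ℂ) * phi ((k : ℕ) + 1) ((Δc : ℂ) * (H : ℂ) * lamf)) * Y j := by
  set z : ℂ := (Δc : ℂ) * (H : ℂ) * lamf with hz
  have hd : ∀ t ∈ Set.uIcc (0:ℝ) 1, HasDerivAt
      (fun t : ℝ => Complex.exp (z * (1 - (t : ℂ))) * v (H * t))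
      ((H : ℂ) * lams * ∑ j : Fin p, (∑ k : Fin (K + 1),
        (γ k j : ℂ) * (Complex.exp (z * (1 - (t : ℂ))) * (t : ℂ) ^ (k : ℕ))) * Y j) t := by
    intro t ht
    rw [Set.uIcc_of_le zero_le_one] at ht
    have hm : H * t ∈ Set.Icc (0:ℝ) H :=
      ⟨mul_nonneg hH.le ht.1, by nlinarith [ht.2]⟩
    have h1 := hv (H * t) hm
    have hlin : HasDerivAt (fun t : ℝ => H * t) H t := by
      simpa using (hasDerivAt_id t).const_mul H
    have h2 := HasDerivAt.scomp t h1 hlin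
    have h3 : HasDerivAt (fun t : ℝ => Complex.exp (z * (1 - (t : ℂ))))
        (Complex.exp (z * (1 - (t : ℂ))) * (z * (-1))) t := by
      have h4 : HasDerivAt (fun t : ℝ => (t : ℂ)) 1 t := Complex.ofRealCLM.hasDerivAt
      exact ((h4.const_sub 1).const_mul z).cexp
    have h5 := h3.mul h2
    refine h5.congr_deriv ?_
    have e : H * t / H = t := by field_simp
    rw [e]
    have hs : ∑ j : Fin p, (∑ k : Fin (K + 1),
        (γ k j : ℂ) * (Complex.exp (z * (1 - (t : ℂ))) * (t : ℂ) ^ (k : ℕ))) * Y j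
        = Complex.exp (z * (1 - (t : ℂ))) * ∑ j : Fin p, ∑ k : Fin (K + 1),
            (γ k j : ℂ) * (t : ℂ) ^ (k : ℕ) * Y j := by
      simp only [Finset.mul_sum, Finset.sum_mul]
      refine Finset.sum_congr rfl fun j _ => Finset.sum_congr rfl fun k _ => ?_
      ring
    rw [hs]
    simp only [Complex.real_smul, Function.comp_apply]
    rw [hz]
    ring
  have hI := intervalIntegral.integral_eq_sub_of_hasDerivAt hd
    (Continuous.intervalIntegrable (by fun_prop) _ _)
  rw [intervalIntegral.integral_const_mul, intervalIntegral.integral_finsetSum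
    (fun j _ => Continuous.intervalIntegrable (by fun_prop) _ _)] at hI
  have hJ : ∀ j : Fin p, (∫ t in (0:ℝ)..1, (∑ k : Fin (K + 1),
        (γ k j : ℂ) * (Complex.exp (z * (1 - (t : ℂ))) * (t : ℂ) ^ (k : ℕ))) * Y j)
      = (∑ k : Fin (K + 1), (γ k j : ℂ) * phi ((k : ℕ) + 1) z) * Y j := by
    intro j
    rw [intervalIntegral.integral_mul_const, intervalIntegral.integral_finsetSum
      (fun k _ => Continuous.intervalIntegrable (by fun_prop) _ _)]
    simp only [intervalIntegral.integral_const_mul, phi]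
  simp only [hJ] at hI
  rw [hI]
  simp [phi, hv0]
end

section
/- Let λ^f, λ^s ∈ ℂ, H > 0, z^f := Hλ^f, z^s := Hλ^s with z^s ≠ 2, and y_n ∈ ℂ. Suppose v : ℝ → ℂ satisfies v(0) = y_n and v'(θ) = λ^f·v(θ) + λ^s·y_n for all θ ∈ [0,H]; set Y_2 := v(H). Suppose y_{n+1} ∈ ℂ satisfies the implicit relation y_{n+1} = Y_2 − (Hλ^s/2)·y_n + (Hλ^s/2)·y_{n+1}. Then y_{n+1} = R(z^f, z^s)·y_n with R(z^f, z^s) = ( φ_0(z^f) + (φ_1(z^f) − 1/2)·z^s ) / ( 1 − z^s/2 ). (This is the stability function of the implicit trapezoidal MRI-GARK scheme on the test problem y' = λ^f y + λ^s y.) -/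
/-- Stability function of the implicit trapezoidal MRI-GARK scheme on the test
problem `y' = λᶠ y + λˢ y`: with `zᶠ = Hλᶠ`, `zˢ = Hλˢ ≠ 2`, if `v(0) = yₙ`,
`v'(θ) = λᶠ v(θ) + λˢ yₙ` on `[0,H]`, `Y₂ = v(H)`, and
`yₙ₊₁ = Y₂ − (Hλˢ/2) yₙ + (Hλˢ/2) yₙ₊₁`, then
`yₙ₊₁ = (φ_0(zᶠ) + (φ_1(zᶠ) − 1/2) zˢ) / (1 − zˢ/2) · yₙ`. -/
theorem stmt4 (lamf lams : ℂ) (H : ℝ) (hH : 0 < H)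
    (zf zs : ℂ) (hzf : zf = (H : ℂ) * lamf) (hzs : zs = (H : ℂ) * lams)
    (hzs2 : zs ≠ 2) (yn : ℂ) (v : ℝ → ℂ) (hv0 : v 0 = yn)
    (hv : ∀ θ ∈ Set.Icc (0:ℝ) H, HasDerivAt v (lamf * v θ + lams * yn) θ)
    (Y2 : ℂ) (hY2 : Y2 = v H) (ynp1 : ℂ)
    (hynp1 : ynp1 = Y2 - ((H : ℂ) * lams / 2) * yn + ((H : ℂ) * lams / 2) * ynp1) :
    ynp1 = ((phi 0 zf + (phi 1 zf - 1 / 2) * zs) / (1 - zs / 2)) * yn := by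
  have key : v H - Complex.exp zf * yn = phi 1 zf * zs * yn := by
    have hd : ∀ t ∈ Set.uIcc (0:ℝ) 1, HasDerivAt
        (fun t : ℝ => Complex.exp (zf * (1 - (t : ℂ))) * v (H * t))
        (Complex.exp (zf * (1 - (t : ℂ))) * (zs * yn)) t := by
      intro t ht
      rw [Set.uIcc_of_le zero_le_one] at ht
      have hm : H * t ∈ Set.Icc (0:ℝ) H :=
        ⟨mul_nonneg hH.le ht.1, by nlinarith [ht.2]⟩
      have h0 : HasDerivAt (fun t : ℝ => (t : ℂ)) 1 t := Complex.ofRealCLM.hasDerivAt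
      have h1 : HasDerivAt (fun t : ℝ => Complex.exp (zf * (1 - (t : ℂ))))
          (Complex.exp (zf * (1 - (t : ℂ))) * (zf * (-1))) t :=
        ((h0.const_sub 1).const_mul zf).cexp
      have h2 : HasDerivAt (fun t : ℝ => H * t) (H * 1) t := (hasDerivAt_id t).const_mul H
      have h3 : HasDerivAt (fun t : ℝ => v (H * t))
          ((H * 1) • (lamf * v (H * t) + lams * yn)) t := (hv _ hm).scomp t h2
      refine (h1.mul h3).congr_deriv ?_
      rw [Complex.real_smul, hzf, hzs]
      push_cast
      ring
    have hi := intervalIntegral.integral_eq_sub_of_hasDerivAt hd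
      (Continuous.intervalIntegrable (by fun_prop) _ _)
    rw [intervalIntegral.integral_mul_const] at hi
    simp only [Complex.ofReal_one, Complex.ofReal_zero, sub_self, sub_zero, mul_zero, mul_one,
      Complex.exp_zero, one_mul, hv0] at hi
    rw [← hi]
    simp only [phi, pow_zero, mul_one]
    ring
  have hne : 1 - zs / 2 ≠ 0 := by
    intro h
    apply hzs2
    linear_combination (-2) * h
  rw [div_mul_eq_mul_div, eq_div_iff hne]
  rw [← hzs, hY2] at hynp1
  have h0 : phi 0 zf = Complex.exp zf := rfl
  rw [h0]
  linear_combination hynp1 + key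
end

section
/- Let λ^f, λ^s ∈ ℂ, H > 0, z^f := Hλ^f, z^s := Hλ^s, and y_n ∈ ℂ. Suppose v_1 : ℝ → ℂ satisfies v_1(0) = y_n and v_1'(θ) = (1/2)λ^f·v_1(θ) + (1/2)λ^s·y_n for all θ ∈ [0,H]; set Y_2 := v_1(H). Suppose v_2 : ℝ → ℂ satisfies v_2(0) = Y_2 and v_2'(θ) = (1/2)λ^f·v_2(θ) − (1/2)λ^s·y_n + λ^s·Y_2 for all θ ∈ [0,H]; set y_{n+1} := v_2(H). Then y_{n+1} = [ φ_0(z^f) + ( (3/2)·φ_0(z^f/2) − 1/2 )·φ_1(z^f/2)·z^s + (1/2)·φ_1(z^f/2)^2·(z^s)^2 ]·y_n. (This is the stability function of the explicit midpoint MRI-GARK scheme on the test problem y' = λ^f y + λ^s y.) -/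
theorem linear_ode (a c : ℂ) (H : ℝ) (hH : 0 < H) (v : ℝ → ℂ)
    (hv : ∀ θ ∈ Set.Icc (0:ℝ) H, HasDerivAt v ((1 / 2) * a * v θ + c) θ) :
    v H = phi 0 ((H : ℂ) * a / 2) * v 0 + phi 1 ((H : ℂ) * a / 2) * ((H : ℂ) * c) := by
  set z : ℂ := (H : ℂ) * a / 2 with hz
  have hd : ∀ t ∈ Set.uIcc (0:ℝ) 1,
      HasDerivAt (fun t : ℝ => Complex.exp (z * (1 - (t : ℂ))) * v (H * t))
        (Complex.exp (z * (1 - (t : ℂ))) * (t : ℂ) ^ 0 * ((H : ℂ) * c)) t := by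
    intro t ht
    rw [Set.uIcc_of_le zero_le_one] at ht
    have h1 : HasDerivAt (fun t : ℝ => Complex.exp (z * (1 - (t : ℂ))))
        (Complex.exp (z * (1 - (t : ℂ))) * (z * (-1))) t :=
      (((Complex.ofRealCLM.hasDerivAt (x := t)).const_sub 1).const_mul z).cexp
    have h2 : HasDerivAt (fun t : ℝ => H * t) H t := by
      simpa using (hasDerivAt_id t).const_mul H
    have h3 := (hv (H * t) ⟨mul_nonneg hH.le ht.1, by nlinarith [ht.2]⟩).scomp t h2
    refine (h1.mul h3).congr_deriv ?_
    simp only [Function.comp, Complex.real_smul, hz]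
    ring
  have hint : IntervalIntegrable
      (fun t : ℝ => Complex.exp (z * (1 - (t : ℂ))) * (t : ℂ) ^ 0 * ((H : ℂ) * c))
      MeasureTheory.volume 0 1 := by
    apply Continuous.intervalIntegrable
    fun_prop
  have h := intervalIntegral.integral_eq_sub_of_hasDerivAt hd hint
  rw [intervalIntegral.integral_mul_const] at h
  simp only [Complex.ofReal_one, Complex.ofReal_zero, sub_self, mul_zero, Complex.exp_zero,
    one_mul, mul_one, sub_zero] at h
  simp only [phi]
  rw [h]
  ring

/-- Stability function of the explicit midpoint MRI-GARK scheme on the test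
problem `y' = λᶠ y + λˢ y`: with `zᶠ = Hλᶠ`, `zˢ = Hλˢ`, if
`v₁(0) = yₙ`, `v₁'(θ) = (1/2)λᶠ v₁(θ) + (1/2)λˢ yₙ` on `[0,H]`, `Y₂ = v₁(H)`,
`v₂(0) = Y₂`, `v₂'(θ) = (1/2)λᶠ v₂(θ) − (1/2)λˢ yₙ + λˢ Y₂` on `[0,H]`, and
`yₙ₊₁ = v₂(H)`, then
`yₙ₊₁ = (φ_0(zᶠ) + ((3/2)φ_0(zᶠ/2) − 1/2)φ_1(zᶠ/2) zˢ + (1/2)φ_1(zᶠ/2)² (zˢ)²) yₙ`. -/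
theorem stmt5 (lamf lams : ℂ) (H : ℝ) (hH : 0 < H)
    (zf zs : ℂ) (hzf : zf = (H : ℂ) * lamf) (hzs : zs = (H : ℂ) * lams)
    (yn : ℂ) (v1 v2 : ℝ → ℂ)
    (hv10 : v1 0 = yn)
    (hv1 : ∀ θ ∈ Set.Icc (0:ℝ) H,
      HasDerivAt v1 ((1 / 2) * lamf * v1 θ + (1 / 2) * lams * yn) θ)
    (Y2 : ℂ) (hY2 : Y2 = v1 H)
    (hv20 : v2 0 = Y2)
    (hv2 : ∀ θ ∈ Set.Icc (0:ℝ) H,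
      HasDerivAt v2 ((1 / 2) * lamf * v2 θ - (1 / 2) * lams * yn + lams * Y2) θ)
    (ynp1 : ℂ) (hynp1 : ynp1 = v2 H) :
    ynp1 = (phi 0 zf
      + ((3 / 2) * phi 0 (zf / 2) - 1 / 2) * phi 1 (zf / 2) * zs
      + (1 / 2) * phi 1 (zf / 2) ^ 2 * zs ^ 2) * yn := by
  have e1 := linear_ode lamf (1 / 2 * lams * yn) H hH v1 hv1
  have e2 := linear_ode lamf (-(1 / 2) * lams * yn + lams * Y2) H hH v2 (fun θ hθ => by
    convert hv2 θ hθ using 1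
    ring)
  rw [← hzf] at e1 e2
  have e3 : phi 0 zf = phi 0 (zf / 2) ^ 2 := by
    simp only [phi]
    rw [← Complex.exp_nat_mul]
    congr 1
    push_cast
    ring
  rw [hynp1, e2, hv20, hY2, e1, hv10, e3, hzs]
  ring
end

section
/- Let Γ^0, …, Γ^K be real s×s matrices and Δc ∈ ℝ^s. Then the following are equivalent: (i) Γ^0·1_s = Δc and Γ^k·1_s = 0 for every k = 1, …, K; (ii) for every m ≥ 1, every m×m real matrix A and every d ∈ ℝ^m with A·1_m = d, and every index i ∈ {1,…,s}, one has the vector identity Δc_i·d = Σ_{k=0}^{K} (Γ^k·1_s)_i · (A·d^{∘k}) in ℝ^m. (Condition (ii) is the GARK internal-consistency condition c^{ff} = c^{fs} of the MRI-GARK scheme, required to hold for every consistent fast Runge–Kutta method.) -/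
/-- Internal consistency of MRI-GARK schemes. For coupling matrices
`Γ^0, …, Γ^K ∈ ℝ^{s×s}` and `Δc ∈ ℝ^s`, the following are equivalent:
(i) `Γ^0·1 = Δc` and `Γ^k·1 = 0` for `k ≥ 1`;
(ii) for every `m ≥ 1`, every `m×m` matrix `A` and `d ∈ ℝ^m` with `A·1 = d`
(a consistent fast Runge–Kutta method), and every `i`,
`Δc_i·d = Σ_k (Γ^k·1)_i·(A·d^{∘k})` (the GARK condition `c^{ff} = c^{fs}`). -/
theorem stmt6 {s K : ℕ} (Γ : Fin (K + 1) → Matrix (Fin s) (Fin s) ℝ)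
    (Δc : Fin s → ℝ) :
    ((Γ 0).mulVec (fun _ => 1) = Δc ∧
      ∀ k : Fin (K + 1), k ≠ 0 → (Γ k).mulVec (fun _ => 1) = 0) ↔
    (∀ m : ℕ, 1 ≤ m → ∀ A : Matrix (Fin m) (Fin m) ℝ, ∀ d : Fin m → ℝ,
      A.mulVec (fun _ => 1) = d → ∀ i : Fin s,
        Δc i • d = ∑ k : Fin (K + 1),
          ((Γ k).mulVec (fun _ => 1) i) • A.mulVec (fun ℓ => d ℓ ^ (k : ℕ))) := by
  constructor
  · rintro ⟨h0, hk⟩ m _ A d hA i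
    rw [Finset.sum_eq_single 0]
    · have : A.mulVec (fun ℓ => d ℓ ^ ((0 : Fin (K + 1)) : ℕ)) = d := by
        simpa using hA
      rw [this, h0]
    · intro k _ hk0
      rw [hk k hk0]
      simp
    · simp
  · intro h
    have key : ∀ i : Fin s, ∀ k : Fin (K + 1),
        (Γ k).mulVec (fun _ => 1) i = if k = 0 then Δc i else 0 := by
      intro i k
      have hP : (∑ j : Fin (K + 1), Polynomial.C ((Γ j).mulVec (fun _ => 1) i) *
          Polynomial.X ^ ((j : ℕ) + 1)) = Polynomial.C (Δc i) * Polynomial.X ^ (0 + 1) := by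
        apply Polynomial.funext
        intro x
        have h1 := congrFun (h 1 le_rfl (fun _ _ => x) (fun _ => x)
          (by ext a; simp [Matrix.mulVec, dotProduct]) i) 0
        simp only [Pi.smul_apply, smul_eq_mul, Finset.sum_apply] at h1
        rw [Polynomial.eval_finsetSum]
        simp only [Polynomial.eval_mul, Polynomial.eval_C, Polynomial.eval_pow,
          Polynomial.eval_X, zero_add, pow_one]
        rw [h1]
        refine Finset.sum_congr rfl fun j _ => ?_
        congr 1
        simp [Matrix.mulVec, dotProduct, pow_succ']
      have hc := congrArg (fun p => Polynomial.coeff p ((k : ℕ) + 1)) hP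
      simp only [Polynomial.finsetSum_coeff, Polynomial.coeff_C_mul_X_pow,
        add_left_inj, Fin.val_inj] at hc
      rw [Finset.sum_ite_eq] at hc
      rw [if_pos (Finset.mem_univ k)] at hc
      rw [hc]
      by_cases hk : k = 0
      · subst hk
        simp
      · have hk' : (k : ℕ) ≠ 0 := fun e => hk (Fin.ext e)
        rw [if_neg hk, if_neg hk']
    refine ⟨?_, fun k hk => ?_⟩
    · ext i
      simpa using key i 0
    · ext i
      simpa [hk] using key i k
end

section
/- Let b, d ∈ ℝ^m with b·1_m = 1 and b·d = 1/2, and let c_1, …, c_{s+1} be reals with c_1 = 0, Δc_i := c_{i+1} − c_i. Then for every j = 1, …, s, (A^{sf}·c^{ff})_j = Σ_{i=1}^{j−1} Δc_i · ( b·(c_i·1_m + Δc_i·d) ) = c_j²/2; that is, A^{sf}·c^{ff} equals one half of the entrywise square of the slow abscissae vector (c_1,…,c_s). -/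
theorem stmt8_tele {s : ℕ} (c : Fin (s + 1) → ℝ) (hc0 : c 0 = 0) (k : ℕ) (hk : k < s + 1) :
    ∑ i ∈ Finset.univ.filter (fun i : Fin s => (i : ℕ) + 1 ≤ k),
      ((c i.succ) ^ 2 / 2 - (c i.castSucc) ^ 2 / 2) = (c ⟨k, hk⟩) ^ 2 / 2 := by
  induction k with
  | zero =>
    have : (⟨0, hk⟩ : Fin (s + 1)) = 0 := rfl
    simp [this, hc0]
  | succ k ih =>
    have hs : Finset.univ.filter (fun i : Fin s => (i : ℕ) + 1 ≤ k + 1)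
        = insert (⟨k, by omega⟩ : Fin s)
          (Finset.univ.filter (fun i : Fin s => (i : ℕ) + 1 ≤ k)) := by
      ext i
      simp only [Finset.mem_filter, Finset.mem_univ, true_and, Finset.mem_insert, Fin.ext_iff]
      omega
    rw [hs, Finset.sum_insert (by simp), ih (by omega)]
    simp only [Fin.succ_mk, Fin.castSucc_mk]
    ring


/-- With fast weights `b` and nodes `d` satisfying `b·1 = 1` and `b·d = 1/2`,
and slow abscissae with `c_1 = 0`, `Δc_i = c_{i+1} − c_i`, for every `j`:
`(A^{sf}·c^{ff})_j = Σ_{i=1}^{j−1} Δc_i (b·(c_i·1 + Δc_i·d)) = c_j²/2`,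
where `(A^{sf})_{j,(i,ℓ)} = Δc_i b_ℓ` if `j ≥ i+1` and `0` otherwise and
`c^{ff}_{(i,ℓ)} = c_i + Δc_i d_ℓ`. -/
theorem stmt8 {m s : ℕ} (b d : Fin m → ℝ)
    (hb1 : ∑ ℓ, b ℓ = 1) (hbd : ∑ ℓ, b ℓ * d ℓ = 1 / 2)
    (c : Fin (s + 1) → ℝ) (hc0 : c 0 = 0)
    (Δc : Fin s → ℝ) (hΔc : ∀ i, Δc i = c i.succ - c i.castSucc)
    (j : Fin s) :
    (∑ p : Fin s × Fin m,
        (if (p.1 : ℕ) + 1 ≤ (j : ℕ) then Δc p.1 * b p.2 else 0)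
          * (c p.1.castSucc + Δc p.1 * d p.2)
      = ∑ i ∈ Finset.univ.filter (fun i : Fin s => (i : ℕ) + 1 ≤ (j : ℕ)),
          Δc i * ∑ ℓ, b ℓ * (c i.castSucc + Δc i * d ℓ)) ∧
    ∑ i ∈ Finset.univ.filter (fun i : Fin s => (i : ℕ) + 1 ≤ (j : ℕ)),
        Δc i * ∑ ℓ, b ℓ * (c i.castSucc + Δc i * d ℓ)
      = (c j.castSucc) ^ 2 / 2 := by
  constructor
  · rw [Fintype.sum_prod_type, Finset.sum_filter]
    refine Finset.sum_congr rfl fun i _ => ?_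
    split_ifs with h
    · rw [Finset.mul_sum]
      refine Finset.sum_congr rfl fun l _ => ?_
      simp only []
      ring
    · simp
  · refine Eq.trans ?_ (stmt8_tele c hc0 j (by omega))
    refine Finset.sum_congr rfl fun i _ => ?_
    have h : ∑ l, b l * (c i.castSucc + Δc i * d l)
        = c i.castSucc * ∑ l, b l + Δc i * ∑ l, b l * d l := by
      rw [Finset.mul_sum, Finset.mul_sum, ← Finset.sum_add_distrib]
      refine Finset.sum_congr rfl fun l _ => ?_
      ring
    rw [h, hb1, hbd, hΔc]
    ring
end

section
/- Let A be an m×m real matrix and b, d ∈ ℝ^m with b·1_m = 1, b·d = 1/2 and A·1_m = d, and let c_1, …, c_{s+1} be reals with c_1 = 0, Δc_i := c_{i+1} − c_i. Then for every λ = 1, …, s and ℓ = 1, …, m, (A^{ff}·c^{ff})_{(λ,ℓ)} = (1/2)·c_λ² + c_λ·Δc_λ·d_ℓ + Δc_λ²·(A·d)_ℓ; that is, the λ-th block of A^{ff}·c^{ff} equals (1/2)c_λ²·1_m + c_λΔc_λ·d + Δc_λ²·A·d. -/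
theorem tele_aux {s : ℕ} (f : Fin (s + 1) → ℝ) (i : Fin (s + 1)) :
    ∑ j : Fin s, (if (j : ℕ) < (i : ℕ) then f j.succ - f j.castSucc else 0) = f i - f 0 := by
  induction i using Fin.induction with
  | zero => simp
  | succ k ih =>
    have h : ∀ j : Fin s, (if (j : ℕ) < (k.succ : ℕ) then f j.succ - f j.castSucc else 0)
        = (if (j : ℕ) < (k.castSucc : ℕ) then f j.succ - f j.castSucc else 0)
          + (if j = k then f j.succ - f j.castSucc else 0) := by
      intro j
      rcases lt_trichotomy (j : ℕ) (k : ℕ) with h | h | h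
      · have : j ≠ k := fun e => by simp [e] at h
        simp [h, this, Nat.lt_succ_of_lt h]
      · have : j = k := Fin.ext h
        simp [this]
      · have h1 : j ≠ k := fun e => by simp [e] at h
        have h2 : ¬ (j : ℕ) < k := by omega
        have h3 : ¬ (j : ℕ) < k + 1 := by omega
        simp only [Fin.val_succ, Fin.val_castSucc, if_neg h1, if_neg h2, if_neg h3, add_zero]
    rw [Finset.sum_congr rfl (fun j _ => h j), Finset.sum_add_distrib, ih]
    simp

/-- With a fast Runge–Kutta method `(A, b, d)` satisfying `b·1 = 1`, `b·d = 1/2`,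
`A·1 = d`, and slow abscissae with `c_1 = 0`, `Δc_i = c_{i+1} − c_i`, the block
`(A^{ff}·c^{ff})` at row `(λ,ℓ)` equals
`(1/2)c_λ² + c_λ·Δc_λ·d_ℓ + Δc_λ²·(A·d)_ℓ`, where
`(A^{ff})_{(i,ℓ),(λ,r)} = Δc_i A_{ℓ,r}` if `λ = i`, `Δc_λ b_r` if `λ < i`, `0` if
`λ > i`, and `c^{ff}_{(λ,r)} = c_λ + Δc_λ d_r`. -/
theorem stmt9 {m s : ℕ} (A : Matrix (Fin m) (Fin m) ℝ) (b d : Fin m → ℝ)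
    (hb1 : ∑ ℓ, b ℓ = 1) (hbd : ∑ ℓ, b ℓ * d ℓ = 1 / 2)
    (hA1 : ∀ ℓ, ∑ r, A ℓ r = d ℓ)
    (c : Fin (s + 1) → ℝ) (hc0 : c 0 = 0)
    (Δc : Fin s → ℝ) (hΔc : ∀ i, Δc i = c i.succ - c i.castSucc)
    (i : Fin s) (ℓ : Fin m) :
    ∑ q : Fin s × Fin m,
        (if q.1 = i then Δc i * A ℓ q.2
          else if (q.1 : ℕ) < (i : ℕ) then Δc q.1 * b q.2 else 0)
          * (c q.1.castSucc + Δc q.1 * d q.2)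
      = (1 / 2) * (c i.castSucc) ^ 2 + c i.castSucc * Δc i * d ℓ
        + (Δc i) ^ 2 * ∑ r, A ℓ r * d r := by
  have key : ∀ j : Fin s, ∑ r, (if j = i then Δc i * A ℓ r
          else if (j : ℕ) < (i : ℕ) then Δc j * b r else 0) * (c j.castSucc + Δc j * d r)
      = (if j = i then c i.castSucc * Δc i * d ℓ + (Δc i) ^ 2 * ∑ r, A ℓ r * d r else 0)
        + (if (j : ℕ) < (i.castSucc : ℕ) then
            (fun k => c k ^ 2 / 2) j.succ - (fun k => c k ^ 2 / 2) j.castSucc else 0) := by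
    intro j
    by_cases h : j = i
    · subst h
      simp only [if_true, Fin.val_castSucc, lt_irrefl, if_false, add_zero]
      rw [← hA1 ℓ, Finset.mul_sum, Finset.mul_sum, ← Finset.sum_add_distrib]
      exact Finset.sum_congr rfl (fun r _ => by ring)
    · simp only [if_neg h, Fin.val_castSucc, zero_add]
      by_cases h2 : (j : ℕ) < (i : ℕ)
      · simp only [if_pos h2]
        have e : ∑ r, Δc j * b r * (c j.castSucc + Δc j * d r)
            = Δc j * c j.castSucc * ∑ r, b r + Δc j ^ 2 * ∑ r, b r * d r := by
          rw [Finset.mul_sum, Finset.mul_sum, ← Finset.sum_add_distrib]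
          exact Finset.sum_congr rfl (fun r _ => by ring)
        rw [e, hb1, hbd, hΔc j]
        ring
      · simp [h2]
  rw [Fintype.sum_prod_type]
  rw [Finset.sum_congr rfl (fun j _ => key j), Finset.sum_add_distrib]
  have T := tele_aux (fun k => c k ^ 2 / 2) i.castSucc
  refine (congrArg _ T).trans ?_
  simp [hc0]
  ring
end

section
/- Let b, d ∈ ℝ^m with b·1_m = 1, b·d = 1/2 and b·(d∘d) = 1/3; let c_1, …, c_{s+1} be reals with c_1 = 0, Δc_i := c_{i+1} − c_i; and let β ∈ ℝ^s satisfy Σ_{ℓ=1}^{s} β_ℓ c_ℓ³ = 1/4. Then Σ_{i=1}^{s} Δc_i·( Σ_{ℓ=i+1}^{s} β_ℓ )·( b·(c_i·1_m + Δc_i·d)^{∘2} ) = 1/12. (This shows the MR-GARK fourth-order coupling condition b^{s T} A^{sf} (c^{ff})^{∘2} = 1/12 is automatically satisfied for MRI-GARK schemes.) -/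
theorem telescope_aux {s : ℕ} (f : Fin (s + 1) → ℝ) (ℓ : Fin s) :
    ∑ i : Fin s, (if i < ℓ then f i.succ - f i.castSucc else 0) = f ℓ.castSucc - f 0 := by
  induction s with
  | zero => exact ℓ.elim0
  | succ n ih =>
    rw [Fin.sum_univ_succ]
    induction ℓ using Fin.cases with
    | zero => simp
    | succ k =>
      have h := ih (fun j => f j.succ) k
      simp only [Fin.succ_lt_succ_iff, Fin.succ_pos, if_true, ← Fin.succ_castSucc,
        Fin.castSucc_zero] at h ⊢
      rw [h]
      ring

/-- Fourth-order MR-GARK coupling condition `b^{sT} A^{sf} (c^{ff})^{∘2} = 1/12`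
holds automatically for MRI-GARK schemes: with `b·1 = 1`, `b·d = 1/2`,
`b·(d∘d) = 1/3`, `c_1 = 0`, `Δc_i = c_{i+1} − c_i`, and slow weights `β` with
`Σ_ℓ β_ℓ c_ℓ³ = 1/4`, one has
`Σ_i Δc_i (Σ_{ℓ=i+1}^{s} β_ℓ)(b·(c_i·1 + Δc_i·d)^{∘2}) = 1/12`. -/
theorem stmt12 {m s : ℕ} (b d : Fin m → ℝ)
    (hb1 : ∑ ℓ, b ℓ = 1) (hbd : ∑ ℓ, b ℓ * d ℓ = 1 / 2)
    (hbd2 : ∑ ℓ, b ℓ * (d ℓ * d ℓ) = 1 / 3)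
    (c : Fin (s + 1) → ℝ) (hc0 : c 0 = 0)
    (Δc : Fin s → ℝ) (hΔc : ∀ i, Δc i = c i.succ - c i.castSucc)
    (β : Fin s → ℝ) (hβ : ∑ ℓ : Fin s, β ℓ * (c ℓ.castSucc) ^ 3 = 1 / 4) :
    ∑ i : Fin s, Δc i * (∑ ℓ ∈ Finset.univ.filter (fun ℓ : Fin s => i < ℓ), β ℓ)
        * (∑ r, b r * (c i.castSucc + Δc i * d r) ^ 2) = 1 / 12 := by
  have hq : ∀ i : Fin s, Δc i * (∑ r, b r * (c i.castSucc + Δc i * d r) ^ 2)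
      = ((c i.succ) ^ 3 - (c i.castSucc) ^ 3) / 3 := by
    intro i
    have h : ∑ r, b r * (c i.castSucc + Δc i * d r) ^ 2
        = (c i.castSucc) ^ 2 * ∑ r, b r + 2 * c i.castSucc * Δc i * ∑ r, b r * d r
          + (Δc i) ^ 2 * ∑ r, b r * (d r * d r) := by
      rw [Finset.mul_sum, Finset.mul_sum, Finset.mul_sum, ← Finset.sum_add_distrib,
        ← Finset.sum_add_distrib]
      exact Finset.sum_congr rfl fun r _ => by ring
    rw [h, hb1, hbd, hbd2, hΔc]
    ring
  have h1 : ∀ i : Fin s, Δc i * (∑ ℓ ∈ Finset.univ.filter (fun ℓ : Fin s => i < ℓ), β ℓ)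
        * (∑ r, b r * (c i.castSucc + Δc i * d r) ^ 2)
      = ∑ ℓ : Fin s, β ℓ / 3 * (if i < ℓ then (c i.succ) ^ 3 - (c i.castSucc) ^ 3 else 0) := by
    intro i
    rw [mul_right_comm, hq, Finset.sum_filter, Finset.mul_sum]
    refine Finset.sum_congr rfl fun ℓ _ => ?_
    split_ifs <;> ring
  rw [Finset.sum_congr rfl fun i _ => h1 i, Finset.sum_comm]
  have h2 : ∀ ℓ : Fin s, ∑ i : Fin s,
      β ℓ / 3 * (if i < ℓ then (c i.succ) ^ 3 - (c i.castSucc) ^ 3 else 0)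
      = (β ℓ * (c ℓ.castSucc) ^ 3) / 3 := by
    intro ℓ
    rw [← Finset.mul_sum, telescope_aux (fun j => (c j) ^ 3) ℓ, hc0]
    ring
  rw [Finset.sum_congr rfl fun ℓ _ => h2 ℓ, ← Finset.sum_div, hβ]
  norm_num
end

section
/- Let A be an m×m real matrix, b, d ∈ ℝ^m, and ζ_0, …, ζ_K, ω_0, …, ω_K given reals with b·1_m = 1, b·d = 1/2, b·(A·d^{∘k}) = ζ_k and b·(d ∘ (A·d^{∘k})) = ω_k for k = 0, …, K. Let A^s, Γ^0, …, Γ^K be real s×s matrices, c_1, …, c_{s+1} reals with Δc_i := c_{i+1} − c_i, and c^s := (c_1,…,c_s) ∈ ℝ^s. Then b^f · ( c^{ff} ∘ (A^{fs}·c^s) ) = (1/2)·Σ_{i=1}^{s} (c_{i+1}² − c_i²)·(A^s·c^s)_i + Σ_{k=0}^{K} Σ_{i=1}^{s} Δc_i·( ζ_k·c_i + ω_k·Δc_i )·(Γ^k·c^s)_i. (This is the expansion used to derive the first fourth-order MRI-GARK coupling condition.) -/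
/-- Expansion used for the first fourth-order MRI-GARK coupling condition:
with `b·1 = 1`, `b·d = 1/2`, `b·(A·d^{∘k}) = ζ_k`, `b·(d∘(A·d^{∘k})) = ω_k`,
`b^f·(c^{ff} ∘ (A^{fs}·c^s)) = (1/2)Σ_i (c_{i+1}² − c_i²)(A^s·c^s)_i
  + Σ_k Σ_i Δc_i (ζ_k c_i + ω_k Δc_i)(Γ^k·c^s)_i`,
where `b^f_{(i,ℓ)} = Δc_i b_ℓ`, `c^{ff}_{(i,ℓ)} = c_i + Δc_i d_ℓ`, and
`(A^{fs})_{(i,ℓ),j} = (A^s)_{i,j} + Σ_k (A·d^{∘k})_ℓ (Γ^k)_{i,j}`. -/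
theorem stmt14 {m s K : ℕ} (A : Matrix (Fin m) (Fin m) ℝ) (b d : Fin m → ℝ)
    (ζ ω : Fin (K + 1) → ℝ)
    (hb1 : ∑ ℓ, b ℓ = 1) (hbd : ∑ ℓ, b ℓ * d ℓ = 1 / 2)
    (hζ : ∀ k : Fin (K + 1), ∑ ℓ, b ℓ * (∑ r, A ℓ r * d r ^ (k : ℕ)) = ζ k)
    (hω : ∀ k : Fin (K + 1), ∑ ℓ, b ℓ * (d ℓ * ∑ r, A ℓ r * d r ^ (k : ℕ)) = ω k)
    (As : Matrix (Fin s) (Fin s) ℝ) (Γ : Fin (K + 1) → Matrix (Fin s) (Fin s) ℝ)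
    (c : Fin (s + 1) → ℝ)
    (Δc : Fin s → ℝ) (hΔc : ∀ i, Δc i = c i.succ - c i.castSucc) :
    ∑ p : Fin s × Fin m, (Δc p.1 * b p.2)
        * ((c p.1.castSucc + Δc p.1 * d p.2)
          * ∑ j : Fin s, (As p.1 j
              + ∑ k : Fin (K + 1), (∑ r, A p.2 r * d r ^ (k : ℕ)) * Γ k p.1 j)
            * c j.castSucc)
      = (1 / 2) * (∑ i : Fin s, ((c i.succ) ^ 2 - (c i.castSucc) ^ 2)
            * ∑ j : Fin s, As i j * c j.castSucc)
        + ∑ k : Fin (K + 1), ∑ i : Fin s,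
            Δc i * (ζ k * c i.castSucc + ω k * Δc i)
              * ∑ j : Fin s, Γ k i j * c j.castSucc := by
  have hin : ∀ (i : Fin s) (l : Fin m), ∑ j : Fin s, (As i j
              + ∑ k : Fin (K + 1), (∑ r, A l r * d r ^ (k : ℕ)) * Γ k i j)
            * c j.castSucc = (∑ j : Fin s, As i j * c j.castSucc)
        + ∑ k : Fin (K + 1), (∑ r, A l r * d r ^ (k : ℕ)) *
            ∑ j : Fin s, Γ k i j * c j.castSucc := by
    intro i l
    simp only [add_mul, Finset.sum_add_distrib]
    congr 1
    simp only [Finset.mul_sum]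
    rw [Finset.sum_comm]
    refine Finset.sum_congr rfl fun j _ => ?_
    rw [Finset.sum_mul]
    exact Finset.sum_congr rfl fun k _ => mul_assoc _ _ _
  rw [Fintype.sum_prod_type]
  simp only [hin]
  rw [Finset.sum_comm (s := Finset.univ (α := Fin (K + 1))), Finset.mul_sum,
    ← Finset.sum_add_distrib]
  refine Finset.sum_congr rfl fun i _ => ?_
  generalize (∑ j : Fin s, As i j * c j.castSucc) = S
  generalize hG : (fun k => ∑ j : Fin s, Γ k i j * c j.castSucc) = G
  have hG' : ∀ k, ∑ j : Fin s, Γ k i j * c j.castSucc = G k := fun k => congrFun hG k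
  simp only [hG']
  generalize hg : (fun (l : Fin m) (k : Fin (K + 1)) => ∑ r, A l r * d r ^ (k : ℕ)) = g
  have hg' : ∀ (l : Fin m) (k : Fin (K + 1)), ∑ r, A l r * d r ^ (k : ℕ) = g l k :=
    fun l k => congrFun (congrFun hg l) k
  simp only [hg'] at hζ hω ⊢
  have h1 : ∀ l, Δc i * b l * ((c i.castSucc + Δc i * d l) * (S + ∑ k, g l k * G k))
      = (Δc i * c i.castSucc * S) * b l + (Δc i ^ 2 * S) * (b l * d l)
        + ∑ k, (Δc i * c i.castSucc * G k * (b l * g l k)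
          + Δc i ^ 2 * G k * (b l * (d l * g l k))) := by
    intro l
    have h2 : ∑ k, (Δc i * c i.castSucc * G k * (b l * g l k)
          + Δc i ^ 2 * G k * (b l * (d l * g l k)))
        = (Δc i * b l * (c i.castSucc + Δc i * d l)) * ∑ k, g l k * G k := by
      rw [Finset.mul_sum]
      exact Finset.sum_congr rfl fun k _ => by ring
    rw [h2]
    ring
  simp only [h1]
  rw [Finset.sum_add_distrib, Finset.sum_add_distrib, ← Finset.mul_sum, ← Finset.mul_sum,
    hb1, hbd, Finset.sum_comm]
  congr 1
  · rw [hΔc]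
    ring
  · refine Finset.sum_congr rfl fun k _ => ?_
    rw [Finset.sum_add_distrib, ← Finset.mul_sum, ← Finset.mul_sum, hζ, hω]
    ring
end

section
/- Let A be an m×m real matrix, b, d ∈ ℝ^m, and ζ_0, …, ζ_K given reals with b·1_m = 1 and b·(A·d^{∘k}) = ζ_k for k = 0, …, K. Let A^s, Γ^0, …, Γ^K be real s×s matrices, c_1, …, c_{s+1} reals with Δc_i := c_{i+1} − c_i, c^s := (c_1,…,c_s) ∈ ℝ^s, and β ∈ ℝ^s. Then β^T·A^{sf}·A^{fs}·c^s = Σ_{i=1}^{s} Δc_i·( Σ_{ℓ=i+1}^{s} β_ℓ )·( (A^s + Σ_{k=0}^{K} ζ_k Γ^k)·c^s )_i. (This is the expansion used to derive the fourth-order MRI-GARK coupling condition d^{s T} 𝔄^{ss} c^s = 1/24.) -/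
/-- Expansion used for the fourth-order MRI-GARK coupling condition
`d^{sT} 𝔄^{ss} c^s = 1/24`: with `b·1 = 1` and `b·(A·d^{∘k}) = ζ_k`,
`β^T·A^{sf}·A^{fs}·c^s
  = Σ_i Δc_i (Σ_{ℓ=i+1}^{s} β_ℓ)((A^s + Σ_k ζ_k Γ^k)·c^s)_i`,
where `(A^{sf})_{j,(i,ℓ)} = Δc_i b_ℓ` if `j ≥ i+1` and `0` otherwise, and
`(A^{fs})_{(i,ℓ),j} = (A^s)_{i,j} + Σ_k (A·d^{∘k})_ℓ (Γ^k)_{i,j}`. -/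
theorem stmt15 {m s K : ℕ} (A : Matrix (Fin m) (Fin m) ℝ) (b d : Fin m → ℝ)
    (ζ : Fin (K + 1) → ℝ)
    (hb1 : ∑ ℓ, b ℓ = 1)
    (hζ : ∀ k : Fin (K + 1), ∑ ℓ, b ℓ * (∑ r, A ℓ r * d r ^ (k : ℕ)) = ζ k)
    (As : Matrix (Fin s) (Fin s) ℝ) (Γ : Fin (K + 1) → Matrix (Fin s) (Fin s) ℝ)
    (c : Fin (s + 1) → ℝ)
    (Δc : Fin s → ℝ) (hΔc : ∀ i, Δc i = c i.succ - c i.castSucc)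
    (β : Fin s → ℝ) :
    ∑ p : Fin s × Fin m,
        (∑ j ∈ Finset.univ.filter (fun j : Fin s => p.1 < j), β j)
          * (Δc p.1 * b p.2)
          * ∑ j : Fin s, (As p.1 j
              + ∑ k : Fin (K + 1), (∑ r, A p.2 r * d r ^ (k : ℕ)) * Γ k p.1 j)
            * c j.castSucc
      = ∑ i : Fin s, Δc i
          * (∑ ℓ ∈ Finset.univ.filter (fun ℓ : Fin s => i < ℓ), β ℓ)
          * ∑ j : Fin s, (As i j + ∑ k : Fin (K + 1), ζ k * Γ k i j)
              * c j.castSucc := by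
  have key : ∀ i j : Fin s,
      ∑ ℓ, b ℓ * (As i j + ∑ k : Fin (K + 1), (∑ r, A ℓ r * d r ^ (k : ℕ)) * Γ k i j)
        = As i j + ∑ k : Fin (K + 1), ζ k * Γ k i j := by
    intro i j
    simp_rw [mul_add]
    rw [Finset.sum_add_distrib, ← Finset.sum_mul, hb1, one_mul]
    congr 1
    simp_rw [Finset.mul_sum (s := (Finset.univ : Finset (Fin (K + 1))))]
    rw [Finset.sum_comm]
    refine Finset.sum_congr rfl fun k _ => ?_
    rw [← hζ k, Finset.sum_mul]
    exact Finset.sum_congr rfl fun ℓ _ => (mul_assoc _ _ _).symm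
  rw [Fintype.sum_prod_type]
  refine Finset.sum_congr rfl fun i _ => ?_
  simp_rw [← key, Finset.sum_mul (s := (Finset.univ : Finset (Fin m)))]
  rw [Finset.sum_comm (s := (Finset.univ : Finset (Fin s))), Finset.mul_sum]
  refine Finset.sum_congr rfl fun ℓ _ => ?_
  simp_rw [mul_assoc (b ℓ)]
  rw [← Finset.mul_sum]
  ring
end

section
/- Let z^f, z^s, ξ ∈ ℂ with z^s ≠ 2, set w := −ξ(1−ξ)(z^f−z^s)², and for α ∈ ℂ, α ≠ 0, let M(α) be the 2×2 complex matrix with rows ( φ_0(z^f) + w·φ_2(z^f) , ((1−ξ)/α)(z^f−z^s)(φ_1(z^f) + z^f·φ_2(z^f)) ) and ( −αξ(z^f−z^s)/(2−z^s) , (2+z^s)/(2−z^s) ). Then M(α) = D(α)^{-1}·M(1)·D(α), where D(α) := diag(α, 1); consequently the characteristic polynomial (and hence the spectrum) of M(α) does not depend on α. (M(α) is the stability matrix of the implicit trapezoidal MRI-GARK scheme, and this proves its spectrum is independent of the scaling factor α.) -/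
/-- `M(α)`, the stability matrix of the implicit trapezoidal MRI-GARK scheme,
satisfies `M(α) = D(α)⁻¹·M(1)·D(α)` with `D(α) = diag(α,1)`; consequently its
characteristic polynomial (hence its spectrum) does not depend on `α`. -/
theorem stmt18 (zf zs ξ : ℂ) (hzs : zs ≠ 2) (α : ℂ) (hα : α ≠ 0) :
    let w : ℂ := -ξ * (1 - ξ) * (zf - zs) ^ 2
    let M : ℂ → Matrix (Fin 2) (Fin 2) ℂ := fun a =>
      !![phi 0 zf + w * phi 2 zf,
         ((1 - ξ) / a) * (zf - zs) * (phi 1 zf + zf * phi 2 zf);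
         -a * ξ * (zf - zs) / (2 - zs), (2 + zs) / (2 - zs)]
    let D : ℂ → Matrix (Fin 2) (Fin 2) ℂ := fun a => !![a, 0; 0, 1]
    M α = (D α)⁻¹ * M 1 * D α ∧ (M α).charpoly = (M 1).charpoly := by
  intro w M D
  have hDi : (D α)⁻¹ = !![α⁻¹, 0; 0, 1] := by
    apply Matrix.inv_eq_left_inv
    simp only [D, Matrix.mul_fin_two, Matrix.one_fin_two]
    simp [hα]
  refine ⟨?_, ?_⟩
  · rw [hDi]
    simp only [M, D, Matrix.mul_fin_two]
    ext i j
    fin_cases i <;> fin_cases j <;> simp <;> field_simp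
  · have htr : (M α).trace = (M 1).trace := by
      simp [M, Matrix.trace_fin_two]
    have hdet : (M α).det = (M 1).det := by
      simp only [M, Matrix.det_fin_two_of]
      field_simp
    rw [Matrix.charpoly_fin_two, Matrix.charpoly_fin_two, htr, hdet]
end
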